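/- Let q be a real number with 0 < q < 1; then Ω₁ ≠ 0 and Ω₂ ≠ 0, and 1/Ω₁² + 1/Ω₂² = φ(−q)⁴/(16q⁴·ψ(−q⁵)⁴) + φ(−q⁵)⁴/(16q⁴·ψ(−q⁵)⁴) − φ(−q)²·φ(−q⁵)²/(8q⁴·ψ(−q⁵)⁴) + 2·φ(−q)·ψ(q⁵)/(q·φ(−q^{10})·ψ(−q)). -/

import Mathlib

/-- Ramanujan's theta function `f(a,b) = ∑_{n ∈ ℤ} a^(n(n+1)/2) b^(n(n-1)/2)`. -/
noncomputable def ramTheta (a b : ℂ) : ℂ :=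
  ∑' n : ℤ, a ^ ((n * (n + 1)) / 2).toNat * b ^ ((n * (n - 1)) / 2).toNat

/-- `φ(q) = f(q,q)`. -/
noncomputable def phi (q : ℂ) : ℂ := ramTheta q q

/-- `ψ(q) = f(q,q³)`. -/
noncomputable def psi (q : ℂ) : ℂ := ramTheta q (q ^ 3)

/-- `(a;q)_∞ = ∏_{k=0}^∞ (1 - a q^k)`. -/
noncomputable def qPochInf (a q : ℂ) : ℂ := ∏' k : ℕ, (1 - a * q ^ k)

noncomputable def Omega1 (q : ℝ) : ℂ :=
  ramTheta ((q : ℂ) ^ 4) ((q : ℂ) ^ 6) / ramTheta (-(q : ℂ)) (-(q : ℂ) ^ 9)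

noncomputable def Omega2 (q : ℝ) : ℂ :=
  (q : ℂ) * ramTheta ((q : ℂ) ^ 2) ((q : ℂ) ^ 8) / ramTheta (-(q : ℂ) ^ 3) (-(q : ℂ) ^ 7)

/-!
Completing the square, `1/Ω₁² + 1/Ω₂² = (1/Ω₂ - 1/Ω₁)² + 2/(Ω₁Ω₂)`, and both terms on the right are
theta quotients.

With `A = f(-q,-q⁹)` and `B = f(-q³,-q⁷)`, Ramanujan's formula for `f(a,b) f(c,d)` with `ab = cd`
gives `f(-q,q⁴) f(-q³,q²) = f(q⁴,q⁶) B - q A f(q²,q⁸)`, while `f(a,b) ψ(ab) = f(a,ab²) f(b,a²b)`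
evaluates both factors on the left; hence `1/Ω₂ - 1/Ω₁ = AB / (q ψ(-q⁵)²)`. Sorting the terms of
`φ(-q)² = ∑ (-q)^(m² + n²)` by the residue class of `m + n i` modulo `1 + 2 i`, whose norm is `5`,
gives `φ(-q)² = φ(-q⁵)² - 4 q AB`. Finally `Ω₁Ω₂` is evaluated by writing all theta functions as
infinite products with the Jacobi triple product identity, the limit of a finite identity for
Gaussian binomial coefficients.
-/

open Filter Topology Finset

/-- The triangular numbers `n(n+1)/2`, for integers `n`; the exponents in `f(a,b)` are `triNum n`
and `triNum (-n)`. -/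
def triNum (n : ℤ) : ℤ := n * (n + 1) / 2

lemma two_mul_triNum (n : ℤ) : 2 * triNum n = n * (n + 1) :=
  Int.mul_ediv_cancel' (Int.even_mul_succ_self n).two_dvd

lemma triNum_nonneg (n : ℤ) : 0 ≤ triNum n := by
  have h := two_mul_triNum n
  rcases le_or_gt 0 n with hn | hn <;> nlinarith

lemma triNum_add (m n : ℤ) : triNum (m + n) = triNum m + triNum n + m * n := by
  linarith [two_mul_triNum m, two_mul_triNum n, two_mul_triNum (m + n)]

lemma triNum_add_triNum_neg (n : ℤ) : triNum n + triNum (-n) = n ^ 2 := by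
  linarith [two_mul_triNum n, two_mul_triNum (-n)]

lemma triNum_ne_zero {n : ℤ} (h0 : n ≠ 0) (h1 : n ≠ -1) : triNum n ≠ 0 := fun h => by
  have := two_mul_triNum n
  rw [h, mul_zero, eq_comm, mul_eq_zero] at this
  omega

/-- The general term of the series `f(a,b)`, with integer exponents so that the summation index can
be shifted freely. -/
noncomputable def thetaTerm (a b : ℂ) (n : ℤ) : ℂ := a ^ triNum n * b ^ triNum (-n)

section ThetaSeries

variable {a b : ℂ}

lemma ramTheta_eq_tsum_thetaTerm (a b : ℂ) : ramTheta a b = ∑' n : ℤ, thetaTerm a b n := by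
  refine tsum_congr fun n => ?_
  have hneg : n * (n - 1) / 2 = triNum (-n) := by
    rw [triNum]
    congr 1
    ring
  rw [thetaTerm, ← triNum, hneg, ← zpow_natCast, ← zpow_natCast,
    Int.toNat_of_nonneg (triNum_nonneg n), Int.toNat_of_nonneg (triNum_nonneg (-n))]

lemma thetaTerm_neg (a b : ℂ) (n : ℤ) : thetaTerm a b (-n) = thetaTerm b a n := by
  simp only [thetaTerm, neg_neg, mul_comm]

lemma ramTheta_comm (a b : ℂ) : ramTheta a b = ramTheta b a := by
  simp only [ramTheta_eq_tsum_thetaTerm, ← thetaTerm_neg a b]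
  exact ((Equiv.neg ℤ).tsum_eq _).symm

lemma ramTheta_zero_left (b : ℂ) : ramTheta 0 b = 1 + b := by
  rw [ramTheta_eq_tsum_thetaTerm, tsum_eq_sum (s := {0, -1})]
  · simp [thetaTerm, triNum]
  · intro n hn
    simp only [mem_insert, mem_singleton, not_or] at hn
    rw [thetaTerm, zero_zpow _ (triNum_ne_zero hn.1 hn.2), zero_mul]

lemma thetaTerm_add_one (ha : a ≠ 0) (hb : b ≠ 0) (n : ℤ) :
    thetaTerm a b (n + 1) = a * (a * b) ^ n * thetaTerm a b n := by
  have h1 : triNum 1 = 1 := rfl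
  have h2 : triNum (-1) = 0 := rfl
  simp only [thetaTerm, neg_add, triNum_add, h1, h2, add_zero, mul_one, mul_neg, neg_neg,
    zpow_add₀ ha, zpow_add₀ hb, zpow_one, mul_zpow]
  ring

lemma thetaTerm_add_one_eq_mul_thetaTerm (ha : a ≠ 0) (hb : b ≠ 0) (n : ℤ) :
    thetaTerm a b (n + 1) = a * thetaTerm (a ^ 2 * b) a⁻¹ n := by
  have hn : triNum n = n + triNum (-n) := by linarith [two_mul_triNum n, two_mul_triNum (-n)]
  rw [thetaTerm_add_one ha hb]
  simp only [thetaTerm, hn, sq, zpow_add₀ ha, zpow_add₀ hb, mul_zpow, inv_zpow]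
  field_simp

lemma summable_thetaTerm (ha : a ≠ 0) (hb : b ≠ 0) (hab : ‖a * b‖ < 1) :
    Summable (thetaTerm a b) := by
  have summable_nat {a b : ℂ} (ha : a ≠ 0) (hb : b ≠ 0) (hab : ‖a * b‖ < 1) :
      Summable fun n : ℕ => thetaTerm a b n := by
    have hlim : Tendsto (fun n : ℕ => ‖a * (a * b) ^ n‖) atTop (𝓝 0) := by
      simpa using ((tendsto_pow_atTop_nhds_zero_of_norm_lt_one hab).const_mul a).norm
    refine summable_of_ratio_norm_eventually_le (r := 1 / 2) (by norm_num) ?_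
    filter_upwards [hlim.eventually_le_const (by norm_num : (0 : ℝ) < 1 / 2)] with n hn
    rw [Nat.cast_succ, thetaTerm_add_one ha hb, zpow_natCast, norm_mul]
    gcongr
  refine .of_nat_of_neg (summable_nat ha hb hab) ?_
  simp only [thetaTerm_neg]
  exact summable_nat hb ha (by rwa [mul_comm])

end ThetaSeries

lemma norm_pow_lt_one {x : ℂ} (hx : ‖x‖ < 1) {n : ℕ} (hn : n ≠ 0) : ‖x ^ n‖ < 1 :=
  norm_pow x n ▸ pow_lt_one₀ (norm_nonneg x) hx hn

section ThetaProducts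

variable {a b c d : ℂ}

lemma summable_thetaTerm_mul_thetaTerm (ha : a ≠ 0) (hb : b ≠ 0) (hc : c ≠ 0) (hd : d ≠ 0)
    (hab : ‖a * b‖ < 1) (hcd : ‖c * d‖ < 1) :
    Summable fun z : ℤ × ℤ => thetaTerm a b z.1 * thetaTerm c d z.2 :=
  summable_mul_of_summable_norm (summable_thetaTerm ha hb hab).norm
    (summable_thetaTerm hc hd hcd).norm

lemma ramTheta_mul_ramTheta_eq_tsum (ha : a ≠ 0) (hb : b ≠ 0) (hc : c ≠ 0) (hd : d ≠ 0)
    (hab : ‖a * b‖ < 1) (hcd : ‖c * d‖ < 1) :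
    ramTheta a b * ramTheta c d = ∑' z : ℤ × ℤ, thetaTerm a b z.1 * thetaTerm c d z.2 := by
  rw [ramTheta_eq_tsum_thetaTerm, ramTheta_eq_tsum_thetaTerm]
  exact tsum_mul_tsum_of_summable_norm (summable_thetaTerm ha hb hab).norm
    (summable_thetaTerm hc hd hcd).norm

lemma tsum_eq_sum_tsum_of_bijective {ι α β E : Type*} [Fintype ι] [AddCommGroup E]
    [UniformSpace E] [IsUniformAddGroup E] [CompleteSpace E] [T0Space E] {e : ι × α → β}
    (he : Function.Bijective e) {f : β → E} (hf : Summable f) :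
    ∑' y, f y = ∑ i, ∑' x, f (e (i, x)) := by
  have hsum : Summable fun x => f (e x) := (Equiv.ofBijective e he).summable_iff.mpr hf
  rw [← (Equiv.ofBijective e he).tsum_eq, ← tsum_fintype (L := .unconditional ι)]
  exact hsum.tsum_prod

lemma thetaTerm_add_mul_thetaTerm_sub (ha : a ≠ 0) (hb : b ≠ 0) (hc : c ≠ 0) (hd : d ≠ 0)
    (h : a * b = c * d) (u v : ℤ) :
    thetaTerm a b (u + v) * thetaTerm c d (u - v)
      = thetaTerm (a * c) (b * d) u * thetaTerm (a * d) (b * c) v := by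
  have huv : a ^ (u * v) * b ^ (u * v) = c ^ (u * v) * d ^ (u * v) := by
    rw [← mul_zpow, ← mul_zpow, h]
  have hcuv : c ^ (u * v) ≠ 0 := zpow_ne_zero _ hc
  have hduv : d ^ (u * v) ≠ 0 := zpow_ne_zero _ hd
  simp only [thetaTerm, sub_eq_add_neg, neg_add, triNum_add, neg_neg, neg_mul, mul_neg,
    zpow_add₀ ha, zpow_add₀ hb, zpow_add₀ hc, zpow_add₀ hd, zpow_neg, mul_zpow]
  field_simp
  linear_combination huv

lemma thetaTerm_add_one_mul_thetaTerm_sub (ha : a ≠ 0) (hb : b ≠ 0) (hc : c ≠ 0) (hd : d ≠ 0)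
    (h : a * b = c * d) (u v : ℤ) :
    thetaTerm a b (u + v + 1) * thetaTerm c d (u - v)
      = a * (thetaTerm (a ^ 2 * b * c) (d / a) u * thetaTerm (a ^ 2 * b * d) (c / a) v) := by
  have h' : a ^ 2 * b * a⁻¹ = c * d := by rw [← h]; field_simp
  rw [thetaTerm_add_one_eq_mul_thetaTerm ha hb, mul_assoc, thetaTerm_add_mul_thetaTerm_sub
    (mul_ne_zero (pow_ne_zero 2 ha) hb) (inv_ne_zero ha) hc hd h', inv_mul_eq_div, inv_mul_eq_div]

lemma bijective_add_sub_of_parity : Function.Bijective fun x : Bool × ℤ × ℤ =>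
    (x.2.1 + x.2.2 + (if x.1 then 1 else 0), x.2.1 - x.2.2) := by
  constructor
  · rintro ⟨r, u, v⟩ ⟨s, u', v'⟩ h
    cases r <;> cases s <;> simp at h ⊢ <;> omega
  · rintro ⟨m, n⟩
    rcases Int.emod_two_eq_zero_or_one (m + n) with h | h
    · refine ⟨(false, (m + n) / 2, (m - n) / 2), ?_⟩
      simp only [Bool.false_eq_true, if_false, Prod.mk.injEq]
      omega
    · refine ⟨(true, (m + n - 1) / 2, (m - n - 1) / 2), ?_⟩
      simp only [if_true, Prod.mk.injEq]
      omega

theorem ramTheta_mul_ramTheta (ha : a ≠ 0) (hb : b ≠ 0) (hc : c ≠ 0) (hd : d ≠ 0)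
    (h : a * b = c * d) (hab : ‖a * b‖ < 1) :
    ramTheta a b * ramTheta c d = ramTheta (a * c) (b * d) * ramTheta (a * d) (b * c)
      + a * (ramTheta (a ^ 2 * b * c) (d / a) * ramTheta (a ^ 2 * b * d) (c / a)) := by
  have hcd : ‖c * d‖ < 1 := h ▸ hab
  have hsq : ‖(a * b) ^ 2‖ < 1 := norm_pow_lt_one hab two_ne_zero
  have habc : a ^ 2 * b ≠ 0 := mul_ne_zero (pow_ne_zero 2 ha) hb
  have e1 : a * c * (b * d) = (a * b) ^ 2 := by linear_combination -(a * b) * h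
  have e2 : a * d * (b * c) = (a * b) ^ 2 := by linear_combination -(a * b) * h
  have e3 : a ^ 2 * b * c * (d / a) = (a * b) ^ 2 := by
    field_simp
    linear_combination -h
  have e4 : a ^ 2 * b * d * (c / a) = (a * b) ^ 2 := by
    field_simp
    linear_combination -h
  rw [ramTheta_mul_ramTheta_eq_tsum ha hb hc hd hab hcd,
    ramTheta_mul_ramTheta_eq_tsum (mul_ne_zero ha hc) (mul_ne_zero hb hd) (mul_ne_zero ha hd)
      (mul_ne_zero hb hc) (e1 ▸ hsq) (e2 ▸ hsq),
    ramTheta_mul_ramTheta_eq_tsum (mul_ne_zero habc hc) (div_ne_zero hd ha) (mul_ne_zero habc hd)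
      (div_ne_zero hc ha) (e3 ▸ hsq) (e4 ▸ hsq),
    tsum_eq_sum_tsum_of_bijective bijective_add_sub_of_parity
      (summable_thetaTerm_mul_thetaTerm ha hb hc hd hab hcd),
    Fintype.sum_bool, add_comm, ← tsum_mul_left]
  simp only [if_true, if_false, add_zero, thetaTerm_add_mul_thetaTerm_sub ha hb hc hd h,
    thetaTerm_add_one_mul_thetaTerm_sub ha hb hc hd h, Bool.false_eq_true]

end ThetaProducts

section Quintisection

/-- The index `z = m + n i` of a double series, written as `u (r + w)` with `w` a multiple of
`1 + 2 i` in `ℤ[i]`: the classes of `ℤ[i]` modulo `1 + 2 i` are those of `0`, `1`, `-1`, `i`, `-i`,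
in this order, and the nonzero ones are permuted by the units. -/
def gaussianCoset : Fin 5 × ℤ × ℤ → ℤ × ℤ
  | (0, a, b) => (a + 2 * b, 2 * a - b)
  | (1, a, b) => (1 + a + 2 * b, 2 * a - b)
  | (2, a, b) => (-(1 + a + 2 * b), -(2 * a - b))
  | (3, a, b) => (-(2 * a - b), 1 + a + 2 * b)
  | (4, a, b) => (2 * a - b, -(1 + a + 2 * b))

lemma bijective_gaussianCoset : Function.Bijective gaussianCoset := by
  constructor
  · rintro ⟨r, u, v⟩ ⟨s, u', v'⟩ h
    fin_cases r <;> fin_cases s <;> simp [gaussianCoset] at h ⊢ <;> omega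
  · rintro ⟨m, n⟩
    have hmod : (m + 2 * n) % 5 = 0 ∨ (m + 2 * n) % 5 = 1 ∨ (m + 2 * n) % 5 = 4 ∨
      (m + 2 * n) % 5 = 2 ∨ (m + 2 * n) % 5 = 3 := by omega
    rcases hmod with h | h | h | h | h
    · refine ⟨(0, (m + 2 * n) / 5, (2 * m - n) / 5), ?_⟩
      simp only [gaussianCoset, Prod.mk.injEq]
      omega
    · refine ⟨(1, (m - 1 + 2 * n) / 5, (2 * (m - 1) - n) / 5), ?_⟩
      simp only [gaussianCoset, Prod.mk.injEq]
      omega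
    · refine ⟨(2, (-m - 1 - 2 * n) / 5, (2 * (-m - 1) + n) / 5), ?_⟩
      simp only [gaussianCoset, Prod.mk.injEq]
      omega
    · refine ⟨(3, (n - 1 - 2 * m) / 5, (2 * (n - 1) + m) / 5), ?_⟩
      simp only [gaussianCoset, Prod.mk.injEq]
      omega
    · refine ⟨(4, (-n - 1 + 2 * m) / 5, (2 * (-n - 1) - m) / 5), ?_⟩
      simp only [gaussianCoset, Prod.mk.injEq]
      omega

lemma tsum_eq_of_rotation_invariant {f : ℤ × ℤ → ℂ} (hf : Summable f)
    (hrot : ∀ m n, f (-n, m) = f (m, n)) :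
    ∑' z, f z = ∑' w : ℤ × ℤ, f (w.1 + 2 * w.2, 2 * w.1 - w.2)
      + 4 * ∑' w : ℤ × ℤ, f (1 + w.1 + 2 * w.2, 2 * w.1 - w.2) := by
  have hneg (m n : ℤ) : f (-m, -n) = f (m, n) := by rw [hrot, hrot]
  have hrot' (m n : ℤ) : f (n, -m) = f (m, n) := by rw [← hrot, neg_neg]
  rw [tsum_eq_sum_tsum_of_bijective bijective_gaussianCoset hf, Fin.sum_univ_five]
  simp only [gaussianCoset, hneg, hrot, hrot']
  ring

variable {x : ℂ}

lemma thetaTerm_pow_pow (hx : x ≠ 0) (i j : ℕ) (n : ℤ) :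
    thetaTerm (x ^ i) (x ^ j) n = x ^ (i * triNum n + j * triNum (-n)) := by
  rw [thetaTerm, zpow_add₀ hx, zpow_mul, zpow_mul, zpow_natCast, zpow_natCast]

lemma thetaTerm_self_mul_thetaTerm_self (hx : x ≠ 0) (m n : ℤ) :
    thetaTerm x x m * thetaTerm x x n = x ^ (m ^ 2 + n ^ 2) := by
  simp only [thetaTerm, ← zpow_add₀ hx, triNum_add_triNum_neg]

lemma summable_zpow_sq_add_sq (hx : x ≠ 0) (hx1 : ‖x‖ < 1) :
    Summable fun z : ℤ × ℤ => x ^ (z.1 ^ 2 + z.2 ^ 2) := by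
  have hxx : ‖x * x‖ < 1 := sq x ▸ norm_pow_lt_one hx1 two_ne_zero
  simpa only [thetaTerm_self_mul_thetaTerm_self hx] using
    summable_thetaTerm_mul_thetaTerm hx hx hx hx hxx hxx

lemma phi_sq_eq_tsum (hx : x ≠ 0) (hx1 : ‖x‖ < 1) :
    phi x ^ 2 = ∑' z : ℤ × ℤ, x ^ (z.1 ^ 2 + z.2 ^ 2) := by
  have hxx : ‖x * x‖ < 1 := sq x ▸ norm_pow_lt_one hx1 two_ne_zero
  simp only [phi, sq (ramTheta x x), ramTheta_mul_ramTheta_eq_tsum hx hx hx hx hxx hxx,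
    thetaTerm_self_mul_thetaTerm_self hx]

theorem phi_sq_eq_phi_pow_five_sq_add (hx : x ≠ 0) (hx1 : ‖x‖ < 1) :
    phi x ^ 2 = phi (x ^ 5) ^ 2
      + 4 * x * (ramTheta x (x ^ 9) * ramTheta (x ^ 3) (x ^ 7)) := by
  have hpow {m n : ℕ} (hmn : m + n ≠ 0) : ‖x ^ m * x ^ n‖ < 1 :=
    pow_add x m n ▸ norm_pow_lt_one hx1 hmn
  have hne (n : ℕ) : x ^ n ≠ 0 := pow_ne_zero n hx
  have hzero (w : ℤ × ℤ) : x ^ ((w.1 + 2 * w.2) ^ 2 + (2 * w.1 - w.2) ^ 2)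
      = thetaTerm (x ^ 5) (x ^ 5) w.1 * thetaTerm (x ^ 5) (x ^ 5) w.2 := by
    rw [thetaTerm_pow_pow hx, thetaTerm_pow_pow hx, ← zpow_add₀ hx]
    congr 1
    push_cast
    linear_combination -5 * triNum_add_triNum_neg w.1 - 5 * triNum_add_triNum_neg w.2
  have hunit (w : ℤ × ℤ) : x ^ ((1 + w.1 + 2 * w.2) ^ 2 + (2 * w.1 - w.2) ^ 2)
      = x * (thetaTerm (x ^ 7) (x ^ 3) w.1 * thetaTerm (x ^ 9) (x ^ 1) w.2) := by
    rw [thetaTerm_pow_pow hx, thetaTerm_pow_pow hx, ← zpow_add₀ hx, ← zpow_one_add₀ hx]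
    congr 1
    push_cast
    linear_combination -3 * triNum_add_triNum_neg w.1 - triNum_add_triNum_neg w.2
      - 2 * two_mul_triNum w.1 - 4 * two_mul_triNum w.2
  rw [phi_sq_eq_tsum hx hx1, tsum_eq_of_rotation_invariant (summable_zpow_sq_add_sq hx hx1)
    fun m n => by rw [neg_sq, add_comm]]
  simp only [hzero, hunit, tsum_mul_left, ← ramTheta_mul_ramTheta_eq_tsum (hne _) (hne _) (hne _)
    (hne _) (hpow (by norm_num : 5 + 5 ≠ 0)) (hpow (by norm_num : 5 + 5 ≠ 0)),
    ← ramTheta_mul_ramTheta_eq_tsum (hne _) (hne _) (hne _)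
    (hne _) (hpow (by norm_num : 7 + 3 ≠ 0)) (hpow (by norm_num : 9 + 1 ≠ 0))]
  rw [phi, ramTheta_comm x, ramTheta_comm (x ^ 3), pow_one]
  ring

end Quintisection

section QPochhammer

variable {p x : ℂ}

/-- The finite `q`-Pochhammer symbol `(x;p)_n`, the partial products of `qPochInf x p`. -/
noncomputable def qPoch (x p : ℂ) (n : ℕ) : ℂ := ∏ k ∈ range n, (1 - x * p ^ k)

lemma qPoch_succ (x p : ℂ) (n : ℕ) : qPoch x p (n + 1) = qPoch x p n * (1 - x * p ^ n) :=
  prod_range_succ _ n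

lemma summable_norm_neg_mul_pow (x : ℂ) (hp : ‖p‖ < 1) :
    Summable fun k : ℕ => ‖-(x * p ^ k)‖ := by
  simp only [norm_neg, norm_mul, norm_pow]
  exact (summable_geometric_of_lt_one (norm_nonneg p) hp).mul_left ‖x‖

lemma tendsto_qPoch (x : ℂ) (hp : ‖p‖ < 1) :
    Tendsto (qPoch x p) atTop (𝓝 (qPochInf x p)) := by
  have h := (multipliable_one_add_of_summable
    (summable_norm_neg_mul_pow x hp)).tendsto_prod_tprod_nat
  simp only [← sub_eq_add_neg] at h
  exact h

lemma one_sub_mul_pow_ne_zero (hx : ‖x‖ < 1) (hp : ‖p‖ < 1) (k : ℕ) : 1 - x * p ^ k ≠ 0 := by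
  have hlt : ‖x * p ^ k‖ < 1 := by
    rw [norm_mul, norm_pow]
    exact mul_lt_one_of_nonneg_of_lt_one_left (norm_nonneg x) hx (pow_le_one₀ (norm_nonneg p) hp.le)
  intro h
  rw [← sub_eq_zero.mp h, norm_one] at hlt
  exact lt_irrefl 1 hlt

lemma qPochInf_ne_zero (hx : ‖x‖ < 1) (hp : ‖p‖ < 1) : qPochInf x p ≠ 0 := by
  simpa only [qPochInf, ← sub_eq_add_neg] using
    tprod_one_add_ne_zero_of_summable (f := fun k : ℕ => -(x * p ^ k))
      (fun k => by simpa only [← sub_eq_add_neg] using one_sub_mul_pow_ne_zero hx hp k)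
      (summable_norm_neg_mul_pow x hp)

lemma qPochInf_zero_right (x : ℂ) : qPochInf x 0 = 1 - x := by
  rw [qPochInf, tprod_eq_mulSingle 0 fun k hk => by simp [hk]]
  simp

lemma qPochInf_eq_prod (x : ℂ) (hp : ‖p‖ < 1) {N : ℕ} (hN : N ≠ 0) :
    qPochInf x p = ∏ i ∈ range N, qPochInf (x * p ^ i) (p ^ N) := by
  have hsub : Tendsto (fun n => qPoch x p (N * n)) atTop (𝓝 (qPochInf x p)) :=
    (tendsto_qPoch x hp).comp (tendsto_id.const_mul_atTop' (Nat.pos_of_ne_zero hN))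
  have hprod : Tendsto (fun n => ∏ i ∈ range N, qPoch (x * p ^ i) (p ^ N) n) atTop
      (𝓝 (∏ i ∈ range N, qPochInf (x * p ^ i) (p ^ N))) :=
    tendsto_finsetProd _ fun i _ => tendsto_qPoch _ (norm_pow_lt_one hp hN)
  refine tendsto_nhds_unique hsub (hprod.congr fun n => ?_)
  induction n with
  | zero => simp [qPoch]
  | succ n ih =>
    simp only [qPoch_succ, prod_mul_distrib, ih]
    rw [Nat.mul_succ, qPoch, qPoch, prod_range_add]
    simp only [mul_assoc, ← pow_mul, ← pow_add, add_comm]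

lemma qPochInf_eq_mul (x : ℂ) (hp : ‖p‖ < 1) :
    qPochInf x p = qPochInf x (p ^ 2) * qPochInf (x * p) (p ^ 2) := by
  simpa [prod_range_succ] using qPochInf_eq_prod x hp two_ne_zero

lemma qPochInf_mul_qPochInf_neg (x : ℂ) (hp : ‖p‖ < 1) :
    qPochInf x p * qPochInf (-x) p = qPochInf (x ^ 2) (p ^ 2) := by
  refine tendsto_nhds_unique ((tendsto_qPoch x hp).mul (tendsto_qPoch (-x) hp))
    ((tendsto_qPoch (x ^ 2) (norm_pow_lt_one hp two_ne_zero)).congr fun n => ?_)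
  rw [qPoch, qPoch, qPoch, ← prod_mul_distrib]
  exact prod_congr rfl fun k _ => by ring

lemma qPochInf_sq_mul_qPochInf_neg_eq_one (hp : ‖p‖ < 1) :
    qPochInf p (p ^ 2) * qPochInf (-p) p = 1 := by
  have hp2 : ‖p ^ 2‖ < 1 := norm_pow_lt_one hp two_ne_zero
  have hsplit := qPochInf_eq_mul p hp
  rw [← sq] at hsplit
  apply mul_right_cancel₀ (qPochInf_ne_zero hp2 hp2)
  linear_combination qPochInf_mul_qPochInf_neg p hp - qPochInf (-p) p * hsplit

end QPochhammer

section GaussianBinomial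

variable {p : ℂ}

/-- The reciprocal of `(p;p)_m`, extended by zero to `m < 0` so that `invQPoch_sub_one` holds for
every integer. -/
noncomputable def invQPoch (p : ℂ) (m : ℤ) : ℂ := if 0 ≤ m then (qPoch p p m.toNat)⁻¹ else 0

lemma invQPoch_natCast (p : ℂ) (m : ℕ) : invQPoch p m = (qPoch p p m)⁻¹ := by simp [invQPoch]

lemma invQPoch_of_neg (p : ℂ) {m : ℤ} (hm : m < 0) : invQPoch p m = 0 := if_neg hm.not_ge

lemma invQPoch_sub_one (hp : ‖p‖ < 1) (m : ℤ) :
    invQPoch p (m - 1) = (1 - p ^ m) * invQPoch p m := by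
  rcases lt_trichotomy m 0 with h | rfl | h
  · rw [invQPoch_of_neg p h, invQPoch_of_neg p (by omega), mul_zero]
  · simp [invQPoch_of_neg]
  · obtain ⟨k, rfl⟩ : ∃ k : ℕ, m = (k + 1 : ℕ) := ⟨(m - 1).toNat, by omega⟩
    have hk := one_sub_mul_pow_ne_zero hp hp k
    rw [Nat.cast_succ, add_sub_cancel_right, ← Nat.cast_succ, invQPoch_natCast, invQPoch_natCast,
      qPoch_succ, zpow_natCast, pow_succ', mul_inv, mul_comm, mul_assoc, inv_mul_cancel₀ hk,
      mul_one]

lemma tendsto_inv_qPoch (hp : ‖p‖ < 1) :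
    Tendsto (fun m => (qPoch p p m)⁻¹) atTop (𝓝 (qPochInf p p)⁻¹) :=
  (tendsto_qPoch p hp).inv₀ (qPochInf_ne_zero hp hp)

lemma tendsto_invQPoch (hp : ‖p‖ < 1) :
    Tendsto (invQPoch p) atTop (𝓝 (qPochInf p p)⁻¹) := by
  rw [← Nat.map_cast_int_atTop, tendsto_map'_iff]
  exact (tendsto_inv_qPoch hp).congr fun m => (invQPoch_natCast p m).symm

lemma exists_norm_invQPoch_le (hp : ‖p‖ < 1) : ∃ C, 0 ≤ C ∧ ∀ m, ‖invQPoch p m‖ ≤ C := by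
  obtain ⟨C, hC⟩ := (tendsto_inv_qPoch hp).norm.bddAbove_range
  have hC0 : 0 ≤ C := (norm_nonneg _).trans (hC ⟨0, rfl⟩)
  refine ⟨C, hC0, fun m => ?_⟩
  rcases lt_or_ge m 0 with hm | hm
  · rwa [invQPoch_of_neg p hm, norm_zero]
  · lift m to ℕ using hm
    rw [invQPoch_natCast]
    exact hC ⟨m, rfl⟩

/-- The Gaussian binomial coefficient `[N choose k]` in base `p`, zero unless `0 ≤ k ≤ N`. -/
noncomputable def gaussBinom (p : ℂ) (N : ℕ) (k : ℤ) : ℂ :=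
  qPoch p p N * invQPoch p k * invQPoch p (N - k)

lemma gaussBinom_zero_left (p : ℂ) (k : ℤ) : gaussBinom p 0 k = if k = 0 then 1 else 0 := by
  split_ifs with hk
  · simp [gaussBinom, hk, invQPoch, qPoch]
  · rcases lt_or_gt_of_ne hk with h | h
    · simp [gaussBinom, invQPoch_of_neg p h]
    · simp [gaussBinom, invQPoch_of_neg p (neg_neg_of_pos h)]

lemma gaussBinom_sub (p : ℂ) (N : ℕ) (k : ℤ) : gaussBinom p N (N - k) = gaussBinom p N k := by
  rw [gaussBinom, gaussBinom, sub_sub_cancel, mul_right_comm]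

lemma gaussBinom_succ (hp0 : p ≠ 0) (hp : ‖p‖ < 1) (N : ℕ) (k : ℤ) :
    gaussBinom p (N + 1) k = gaussBinom p N (k - 1) + p ^ k * gaussBinom p N k := by
  have hk := invQPoch_sub_one hp k
  have hNk := invQPoch_sub_one hp (N + 1 - k)
  have hpow : p ^ k * p ^ (N + 1 - k : ℤ) = p * p ^ N := by
    rw [← zpow_add₀ hp0, add_sub_cancel, zpow_add_one₀ hp0, zpow_natCast, mul_comm]
  rw [gaussBinom, gaussBinom, gaussBinom, qPoch_succ, hk,
    show (N : ℤ) - (k - 1) = N + 1 - k by ring, show (N : ℤ) - k = N + 1 - k - 1 by ring, hNk,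
    ← hpow, Nat.cast_succ]
  ring

lemma gaussBinom_succ' (hp0 : p ≠ 0) (hp : ‖p‖ < 1) (N : ℕ) (k : ℤ) :
    gaussBinom p (N + 1) k
      = p ^ (N + 1 - k : ℤ) * gaussBinom p N (k - 1) + gaussBinom p N k := by
  rw [← gaussBinom_sub, gaussBinom_succ hp0 hp, ← gaussBinom_sub p N k,
    ← gaussBinom_sub p N (k - 1), Nat.cast_succ, add_comm, sub_sub_eq_add_sub,
    show (N : ℤ) + 1 - k - 1 = N - k by ring]

lemma tendsto_gaussBinom_add_self (hp : ‖p‖ < 1) (j : ℤ) :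
    Tendsto (fun n : ℕ => gaussBinom p (n + n) (n + j)) atTop (𝓝 (qPochInf p p)⁻¹) := by
  have hcast : Tendsto (fun n : ℕ => (n : ℤ)) atTop atTop := tendsto_natCast_atTop_atTop
  have hnum : Tendsto (fun n => qPoch p p (n + n)) atTop (𝓝 (qPochInf p p)) :=
    (tendsto_qPoch p hp).comp (tendsto_id.atTop_add_atTop tendsto_id)
  have hadd := (tendsto_invQPoch hp).comp (tendsto_atTop_add_const_right atTop j hcast)
  have hsub := (tendsto_invQPoch hp).comp (tendsto_atTop_add_const_right atTop (-j) hcast)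
  have h := (hnum.mul hadd).mul hsub
  rw [mul_inv_cancel₀ (qPochInf_ne_zero hp hp), one_mul] at h
  refine h.congr fun n => ?_
  simp only [Function.comp_apply, gaussBinom]
  congr 2
  push_cast
  ring

lemma exists_norm_gaussBinom_le (hp : ‖p‖ < 1) : ∃ C, ∀ N k, ‖gaussBinom p N k‖ ≤ C := by
  obtain ⟨A, hA⟩ := (tendsto_qPoch p hp).norm.bddAbove_range
  obtain ⟨B, hB0, hB⟩ := exists_norm_invQPoch_le hp
  have hA0 : 0 ≤ A := (norm_nonneg _).trans (hA ⟨0, rfl⟩)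
  refine ⟨A * B * B, fun N k => ?_⟩
  rw [gaussBinom, norm_mul, norm_mul]
  gcongr
  exacts [hA ⟨N, rfl⟩, hB _, hB _]

end GaussianBinomial

section TripleProduct

variable {a b s : ℂ}

lemma hasSum_gaussBinom_succ_left (ha : a ≠ 0) (hb : b ≠ 0) (hab : ‖a * b‖ < 1) {N m : ℕ} {k : ℤ}
    (hN : m + k = N) (h : HasSum (fun j => gaussBinom (a * b) N (k + j) * thetaTerm a b j) s) :
    HasSum (fun j => gaussBinom (a * b) (N + 1) (k + j) * thetaTerm a b j)
      (s * (1 - -a * (a * b) ^ m)) := by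
  have hab0 : a * b ≠ 0 := mul_ne_zero ha hb
  have hshift := ((Equiv.subRight (1 : ℤ)).hasSum_iff.mpr h).mul_left (a * (a * b) ^ m)
  convert h.add hshift using 1
  · ext j
    have hterm := thetaTerm_add_one ha hb (j - 1)
    have hpow : (a * b) ^ (N + 1 - (k + j) : ℤ) * (a * b) ^ (j - 1) = (a * b) ^ m := by
      rw [← zpow_add₀ hab0, ← zpow_natCast]
      congr 1
      linarith
    rw [sub_add_cancel] at hterm
    simp only [Function.comp_apply, Equiv.subRight_apply]
    rw [gaussBinom_succ' hab0 hab, ← hpow, hterm, add_sub_assoc k]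
    ring
  · ring

lemma hasSum_gaussBinom_succ_right (ha : a ≠ 0) (hb : b ≠ 0) (hab : ‖a * b‖ < 1) {N n : ℕ}
    (h : HasSum (fun j => gaussBinom (a * b) N (n + j) * thetaTerm a b j) s) :
    HasSum (fun j => gaussBinom (a * b) (N + 1) ((n + 1 : ℕ) + j) * thetaTerm a b j)
      (s * (1 - -b * (a * b) ^ n)) := by
  have hab0 : a * b ≠ 0 := mul_ne_zero ha hb
  have hshift := ((Equiv.addRight (1 : ℤ)).hasSum_iff.mpr h).mul_left (b * (a * b) ^ n)
  convert h.add hshift using 1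
  · ext j
    have hindex : ((n + 1 : ℕ) + j : ℤ) = n + j + 1 := by push_cast; ring
    simp only [Function.comp_apply, Equiv.coe_addRight]
    rw [hindex, gaussBinom_succ hab0 hab, add_sub_cancel_right, thetaTerm_add_one ha hb,
      zpow_add_one₀ hab0, zpow_add₀ hab0, zpow_natCast, ← add_assoc]
    ring
  · ring

theorem hasSum_gaussBinom_mul_thetaTerm (ha : a ≠ 0) (hb : b ≠ 0) (hab : ‖a * b‖ < 1) (m n : ℕ) :
    HasSum (fun j => gaussBinom (a * b) (m + n) (n + j) * thetaTerm a b j)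
      (qPoch (-a) (a * b) m * qPoch (-b) (a * b) n) := by
  induction n with
  | zero =>
    induction m with
    | zero =>
      convert hasSum_ite_eq (0 : ℤ) (1 : ℂ) using 1
      · ext j
        by_cases hj : j = 0 <;> simp [gaussBinom_zero_left, hj, thetaTerm, triNum]
      · simp [qPoch]
    | succ m ih =>
      rw [qPoch_succ, mul_right_comm]
      exact hasSum_gaussBinom_succ_left ha hb hab (N := m) (by simp) ih
  | succ n ih =>
    rw [qPoch_succ, ← mul_assoc]
    exact hasSum_gaussBinom_succ_right ha hb hab ih

lemma ramTheta_eq_qPochInf_of_ne_zero (ha : a ≠ 0) (hb : b ≠ 0) (hab : ‖a * b‖ < 1) :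
    ramTheta a b
      = qPochInf (-a) (a * b) * qPochInf (-b) (a * b) * qPochInf (a * b) (a * b) := by
  obtain ⟨C, hC⟩ := exists_norm_gaussBinom_le hab
  have hseries : Tendsto
      (fun n : ℕ => ∑' j, gaussBinom (a * b) (n + n) (n + j) * thetaTerm a b j) atTop
      (𝓝 (∑' j, (qPochInf (a * b) (a * b))⁻¹ * thetaTerm a b j)) := by
    refine tendsto_tsum_of_dominated_convergence
      ((summable_thetaTerm ha hb hab).norm.mul_left C)
      (fun j => (tendsto_gaussBinom_add_self hab j).mul_const _)
      (.of_forall fun n j => ?_)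
    rw [norm_mul]
    gcongr
    exact hC _ _
  have hproduct : Tendsto
      (fun n : ℕ => ∑' j, gaussBinom (a * b) (n + n) (n + j) * thetaTerm a b j) atTop
      (𝓝 (qPochInf (-a) (a * b) * qPochInf (-b) (a * b))) :=
    ((tendsto_qPoch (-a) hab).mul (tendsto_qPoch (-b) hab)).congr fun n =>
      (hasSum_gaussBinom_mul_thetaTerm ha hb hab n n).tsum_eq.symm
  rw [tendsto_nhds_unique hproduct hseries, tsum_mul_left, ← ramTheta_eq_tsum_thetaTerm,
    mul_right_comm, inv_mul_cancel₀ (qPochInf_ne_zero hab hab), one_mul]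

theorem jacobi_triple_product {p : ℂ} (hp : ‖p‖ < 1) (h : a * b = p) :
    ramTheta a b = qPochInf (-a) p * qPochInf (-b) p * qPochInf p p := by
  subst h
  rcases eq_or_ne a 0 with rfl | ha
  · simp [ramTheta_zero_left, qPochInf_zero_right]
  rcases eq_or_ne b 0 with rfl | hb
  · simp [ramTheta_comm a, ramTheta_zero_left, qPochInf_zero_right]
  exact ramTheta_eq_qPochInf_of_ne_zero ha hb hp

lemma ramTheta_ne_zero (ha : ‖a‖ < 1) (hb : ‖b‖ < 1) : ramTheta a b ≠ 0 := by
  have hab : ‖a * b‖ < 1 := by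
    rw [norm_mul]
    exact mul_lt_one_of_nonneg_of_lt_one_left (norm_nonneg a) ha hb.le
  rw [jacobi_triple_product hab rfl]
  exact mul_ne_zero (mul_ne_zero (qPochInf_ne_zero (by rwa [norm_neg]) hab)
    (qPochInf_ne_zero (by rwa [norm_neg]) hab)) (qPochInf_ne_zero hab hab)

end TripleProduct

section ThetaQuotients

variable {a b x : ℂ}

lemma psi_eq (hx : ‖x‖ < 1) : psi x = qPochInf (-x) (x ^ 2) * qPochInf (x ^ 4) (x ^ 4) := by
  have hsplit := qPochInf_eq_mul (-x) (norm_pow_lt_one hx two_ne_zero)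
  rw [← pow_mul, neg_mul, ← pow_succ'] at hsplit
  rw [psi, jacobi_triple_product (norm_pow_lt_one hx four_ne_zero) (pow_succ' x 3).symm, hsplit]

lemma qPochInf_mul_psi (hx : ‖x‖ < 1) :
    qPochInf x (x ^ 2) * psi x = qPochInf (x ^ 2) (x ^ 2) := by
  have hx2 : ‖x ^ 2‖ < 1 := norm_pow_lt_one hx two_ne_zero
  rw [psi_eq hx, ← mul_assoc, qPochInf_mul_qPochInf_neg x hx2, qPochInf_eq_mul (x ^ 2) hx2,
    ← pow_mul, ← pow_add]

lemma qPochInf_self (hx : ‖x‖ < 1) :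
    qPochInf x x = qPochInf x (x ^ 2) * qPochInf (x ^ 2) (x ^ 2) := by
  rw [qPochInf_eq_mul x hx, ← sq]

lemma qPochInf_neg_self (hx : ‖x‖ < 1) :
    qPochInf (-x) x = qPochInf (-x) (x ^ 2) * qPochInf (-x ^ 2) (x ^ 2) := by
  rw [qPochInf_eq_mul (-x) hx, neg_mul, ← sq]

lemma qPochInf_neg_mul_phi_neg (hx : ‖x‖ < 1) :
    qPochInf (-x) x * phi (-x) = qPochInf x x := by
  have hphi : phi (-x) = qPochInf x (x ^ 2) * qPochInf x (x ^ 2) * qPochInf (x ^ 2) (x ^ 2) := by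
    rw [phi, jacobi_triple_product (norm_pow_lt_one hx two_ne_zero) (by ring), neg_neg]
  rw [hphi]
  linear_combination qPochInf x (x ^ 2) * qPochInf (x ^ 2) (x ^ 2)
    * qPochInf_sq_mul_qPochInf_neg_eq_one hx - qPochInf_self hx

theorem ramTheta_mul_psi (hab : ‖a * b‖ < 1) :
    ramTheta a b * psi (a * b) = ramTheta a (a * b ^ 2) * ramTheta b (a ^ 2 * b) := by
  have hab2 : ‖(a * b) ^ 2‖ < 1 := norm_pow_lt_one hab two_ne_zero
  rw [jacobi_triple_product hab rfl,
    jacobi_triple_product hab2 (by ring : a * (a * b ^ 2) = (a * b) ^ 2),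
    jacobi_triple_product hab2 (by ring : b * (a ^ 2 * b) = (a * b) ^ 2),
    qPochInf_self hab, ← qPochInf_mul_psi hab, qPochInf_eq_mul (-a) hab, qPochInf_eq_mul (-b) hab,
    show -a * (a * b) = -(a ^ 2 * b) by ring, show -b * (a * b) = -(a * b ^ 2) by ring]
  ring

lemma qPochInf_mul_ramTheta_neg_mul_ramTheta_neg (hx : ‖x‖ < 1) :
    qPochInf (x ^ 5) (x ^ 10) * (ramTheta (-x) (-x ^ 9) * ramTheta (-x ^ 3) (-x ^ 7))
      = qPochInf x (x ^ 2) * qPochInf (x ^ 10) (x ^ 10) ^ 2 := by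
  have hx10 : ‖x ^ 10‖ < 1 := norm_pow_lt_one hx (by norm_num)
  have hsplit : qPochInf x (x ^ 2) = qPochInf x (x ^ 10) * qPochInf (x ^ 3) (x ^ 10)
      * qPochInf (x ^ 5) (x ^ 10) * qPochInf (x ^ 7) (x ^ 10) * qPochInf (x ^ 9) (x ^ 10) := by
    rw [qPochInf_eq_prod x (N := 5) (norm_pow_lt_one hx two_ne_zero) (by norm_num)]
    simp only [prod_range_succ, prod_range_zero]
    ring_nf
  rw [jacobi_triple_product hx10 (by ring : -x * -x ^ 9 = x ^ 10),
    jacobi_triple_product hx10 (by ring : -x ^ 3 * -x ^ 7 = x ^ 10), hsplit]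
  simp only [neg_neg]
  ring

lemma qPochInf_neg_mul_ramTheta_mul_ramTheta (hx : ‖x‖ < 1) :
    qPochInf (-x ^ 5) (x ^ 5) * (ramTheta (x ^ 2) (x ^ 3) * ramTheta x (x ^ 4))
      = qPochInf (-x) x * qPochInf (x ^ 5) (x ^ 5) ^ 2 := by
  have hx5 : ‖x ^ 5‖ < 1 := norm_pow_lt_one hx (by norm_num)
  have hsplit : qPochInf (-x) x = qPochInf (-x) (x ^ 5) * qPochInf (-x ^ 2) (x ^ 5)
      * qPochInf (-x ^ 3) (x ^ 5) * qPochInf (-x ^ 4) (x ^ 5) * qPochInf (-x ^ 5) (x ^ 5) := by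
    rw [qPochInf_eq_prod (-x) (N := 5) hx (by norm_num)]
    simp only [prod_range_succ, prod_range_zero]
    ring_nf
  rw [jacobi_triple_product hx5 (by ring : x ^ 2 * x ^ 3 = x ^ 5),
    jacobi_triple_product hx5 (by ring : x * x ^ 4 = x ^ 5), hsplit]
  ring

end ThetaQuotients

section Omega

variable {q : ℂ}

/-- `Ω₁` as a function of a complex variable. -/
noncomputable def omega₁ (q : ℂ) : ℂ := ramTheta (q ^ 4) (q ^ 6) / ramTheta (-q) (-q ^ 9)

/-- `Ω₂` as a function of a complex variable. -/
noncomputable def omega₂ (q : ℂ) : ℂ := q * ramTheta (q ^ 2) (q ^ 8) / ramTheta (-q ^ 3) (-q ^ 7)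

lemma ramTheta_pow_ne_zero (hq1 : ‖q‖ < 1) {m n : ℕ} (hm : m ≠ 0) (hn : n ≠ 0) :
    ramTheta (q ^ m) (q ^ n) ≠ 0 :=
  ramTheta_ne_zero (norm_pow_lt_one hq1 hm) (norm_pow_lt_one hq1 hn)

lemma ramTheta_neg_pow_ne_zero (hq1 : ‖q‖ < 1) {m n : ℕ} (hm : m ≠ 0) (hn : n ≠ 0) :
    ramTheta (-q ^ m) (-q ^ n) ≠ 0 :=
  ramTheta_ne_zero (by rw [norm_neg]; exact norm_pow_lt_one hq1 hm)
    (by rw [norm_neg]; exact norm_pow_lt_one hq1 hn)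

lemma phi_ne_zero (hq1 : ‖q‖ < 1) : phi q ≠ 0 := ramTheta_ne_zero hq1 hq1

lemma psi_ne_zero (hq1 : ‖q‖ < 1) : psi q ≠ 0 :=
  ramTheta_ne_zero hq1 (norm_pow_lt_one hq1 three_ne_zero)

lemma omega₁_ne_zero (hq1 : ‖q‖ < 1) : omega₁ q ≠ 0 :=
  div_ne_zero (ramTheta_pow_ne_zero hq1 four_ne_zero (by norm_num))
    (by simpa using ramTheta_neg_pow_ne_zero hq1 one_ne_zero (by norm_num : 9 ≠ 0))

lemma omega₂_ne_zero (hq0 : q ≠ 0) (hq1 : ‖q‖ < 1) : omega₂ q ≠ 0 :=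
  div_ne_zero (mul_ne_zero hq0 (ramTheta_pow_ne_zero hq1 two_ne_zero (by norm_num)))
    (ramTheta_neg_pow_ne_zero hq1 three_ne_zero (by norm_num))

lemma ramTheta_neg_mul_ramTheta_neg_eq (hq0 : q ≠ 0) (hq1 : ‖q‖ < 1) :
    ramTheta (-q) (-q ^ 9) * ramTheta (-q ^ 3) (-q ^ 7)
      = (phi (-q ^ 5) ^ 2 - phi (-q) ^ 2) / (4 * q) := by
  have h := phi_sq_eq_phi_pow_five_sq_add (neg_ne_zero.mpr hq0) (by rwa [norm_neg])
  have hodd {n : ℕ} (hn : Odd n) : (-q) ^ n = -q ^ n := hn.neg_pow q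
  rw [hodd (by decide : Odd 3), hodd (by decide : Odd 5), hodd (by decide : Odd 7),
    hodd (by decide : Odd 9)] at h
  rw [eq_div_iff (by simpa using hq0)]
  linear_combination h

lemma ramTheta_mul_sub_ramTheta_mul (hq0 : q ≠ 0) (hq1 : ‖q‖ < 1) :
    ramTheta (q ^ 4) (q ^ 6) * ramTheta (-q ^ 3) (-q ^ 7)
        - q * (ramTheta (-q) (-q ^ 9) * ramTheta (q ^ 2) (q ^ 8))
      = ramTheta (-q) (q ^ 4) * ramTheta (-q ^ 3) (q ^ 2) := by
  have hnorm : ‖-q * q ^ 4‖ < 1 := by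
    rw [neg_mul, norm_neg, ← pow_succ']
    exact norm_pow_lt_one hq1 (by norm_num)
  have h := ramTheta_mul_ramTheta (neg_ne_zero.mpr hq0) (pow_ne_zero 4 hq0)
    (neg_ne_zero.mpr (pow_ne_zero 3 hq0)) (pow_ne_zero 2 hq0)
    (by ring : -q * q ^ 4 = -q ^ 3 * q ^ 2) hnorm
  rw [h, show -q * -q ^ 3 = q ^ 4 by ring, show q ^ 4 * q ^ 2 = q ^ 6 by ring,
    show -q * q ^ 2 = -q ^ 3 by ring, show q ^ 4 * -q ^ 3 = -q ^ 7 by ring,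
    show (-q) ^ 2 * q ^ 4 * -q ^ 3 = -q ^ 9 by ring,
    show (-q) ^ 2 * q ^ 4 * q ^ 2 = q ^ 8 by ring,
    show q ^ 2 / -q = -q by field_simp, show -q ^ 3 / -q = q ^ 2 by field_simp,
    ramTheta_comm (-q ^ 9), ramTheta_comm (q ^ 8)]
  ring

lemma one_div_omega₂_sub_one_div_omega₁ (hq0 : q ≠ 0) (hq1 : ‖q‖ < 1) :
    1 / omega₂ q - 1 / omega₁ q
      = ramTheta (-q) (-q ^ 9) * ramTheta (-q ^ 3) (-q ^ 7) / (q * psi (-q ^ 5) ^ 2) := by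
  have hnorm : ‖-q ^ 5‖ < 1 := by
    rw [norm_neg]
    exact norm_pow_lt_one hq1 (by norm_num)
  have hC := ramTheta_pow_ne_zero hq1 four_ne_zero (by norm_num : 6 ≠ 0)
  have hD := ramTheta_pow_ne_zero hq1 two_ne_zero (by norm_num : 8 ≠ 0)
  have hpsi := psi_ne_zero hnorm
  have h1 : ramTheta (-q) (q ^ 4) * psi (-q ^ 5)
      = ramTheta (-q) (-q ^ 9) * ramTheta (q ^ 4) (q ^ 6) := by
    have e : -q * q ^ 4 = -q ^ 5 := by ring
    convert ramTheta_mul_psi (e ▸ hnorm) using 3 <;> ring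
  have h2 : ramTheta (-q ^ 3) (q ^ 2) * psi (-q ^ 5)
      = ramTheta (-q ^ 3) (-q ^ 7) * ramTheta (q ^ 2) (q ^ 8) := by
    have e : -q ^ 3 * q ^ 2 = -q ^ 5 := by ring
    convert ramTheta_mul_psi (e ▸ hnorm) using 3 <;> ring
  have h3 := ramTheta_mul_sub_ramTheta_mul hq0 hq1
  rw [omega₁, omega₂, one_div_div, one_div_div, div_sub_div _ _ (mul_ne_zero hq0 hD) hC,
    div_eq_div_iff (mul_ne_zero (mul_ne_zero hq0 hD) hC) (mul_ne_zero hq0 (pow_ne_zero 2 hpsi))]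
  linear_combination q * psi (-q ^ 5) ^ 2 * h3
    + q * psi (-q ^ 5) * ramTheta (-q ^ 3) (q ^ 2) * h1
    + q * ramTheta (-q) (-q ^ 9) * ramTheta (q ^ 4) (q ^ 6) * h2

lemma ramTheta_mul_eq_phi_mul_psi (hq1 : ‖q‖ < 1) :
    ramTheta (-q) (-q ^ 9) * ramTheta (-q ^ 3) (-q ^ 7) * (phi (-q ^ 10) * psi (-q))
      = ramTheta (q ^ 4) (q ^ 6) * ramTheta (q ^ 2) (q ^ 8) * (phi (-q) * psi (q ^ 5)) := by
  have hneg {x : ℂ} (hx : ‖x‖ < 1) : ‖-x‖ < 1 := by rwa [norm_neg]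
  have hq2 : ‖q ^ 2‖ < 1 := norm_pow_lt_one hq1 two_ne_zero
  have hq5 : ‖q ^ 5‖ < 1 := norm_pow_lt_one hq1 (by norm_num)
  have hq10 : ‖q ^ 10‖ < 1 := norm_pow_lt_one hq1 (by norm_num)
  have hodd := qPochInf_mul_ramTheta_neg_mul_ramTheta_neg hq1
  have heven := qPochInf_neg_mul_ramTheta_mul_ramTheta hq2
  have hpsi := qPochInf_mul_psi (hneg hq1)
  have hpsi5 := qPochInf_mul_psi hq5
  have hphi := qPochInf_neg_mul_phi_neg hq1
  have hphi10 := qPochInf_neg_mul_phi_neg hq10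
  simp only [← pow_mul, Nat.reduceMul, neg_sq] at heven hpsi hpsi5
  rw [qPochInf_neg_self hq1, qPochInf_self hq1] at hphi
  apply mul_left_cancel₀ (mul_ne_zero (qPochInf_ne_zero (hneg hq1) hq2)
    (mul_ne_zero (qPochInf_ne_zero hq5 hq10) (qPochInf_ne_zero (hneg hq10) hq10)))
  calc
    _ = (qPochInf (q ^ 5) (q ^ 10) * (ramTheta (-q) (-q ^ 9) * ramTheta (-q ^ 3) (-q ^ 7)))
        * (qPochInf (-q ^ 10) (q ^ 10) * phi (-q ^ 10)) * (qPochInf (-q) (q ^ 2) * psi (-q)) := by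
      ring
    _ = qPochInf (q ^ 10) (q ^ 10) ^ 3 * (qPochInf q (q ^ 2) * qPochInf (q ^ 2) (q ^ 2)) := by
      rw [hodd, hphi10, hpsi]
      ring
    _ = (qPochInf (-q ^ 2) (q ^ 2) * qPochInf (q ^ 10) (q ^ 10) ^ 2)
        * qPochInf (q ^ 10) (q ^ 10) * (qPochInf (-q) (q ^ 2) * phi (-q)) := by
      rw [← hphi]
      ring
    _ = _ := by
      rw [← heven, ← hpsi5]
      ring

lemma one_div_omega₁_mul_omega₂ (hq0 : q ≠ 0) (hq1 : ‖q‖ < 1) :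
    1 / (omega₁ q * omega₂ q) = phi (-q) * psi (q ^ 5) / (q * phi (-q ^ 10) * psi (-q)) := by
  have hphi : phi (-q ^ 10) ≠ 0 := phi_ne_zero (by
    rw [norm_neg]
    exact norm_pow_lt_one hq1 (by norm_num))
  have hpsi : psi (-q) ≠ 0 := psi_ne_zero (by rwa [norm_neg])
  have hC := ramTheta_pow_ne_zero hq1 four_ne_zero (by norm_num : 6 ≠ 0)
  have hD := ramTheta_pow_ne_zero hq1 two_ne_zero (by norm_num : 8 ≠ 0)
  rw [omega₁, omega₂, div_mul_div_comm, one_div_div, div_eq_div_iff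
    (mul_ne_zero hC (mul_ne_zero hq0 hD)) (mul_ne_zero (mul_ne_zero hq0 hphi) hpsi)]
  linear_combination q * ramTheta_mul_eq_phi_mul_psi hq1

end Omega

theorem stmt13_general {q : ℂ} (hq0 : q ≠ 0) (hq1 : ‖q‖ < 1) :
    omega₁ q ≠ 0 ∧ omega₂ q ≠ 0 ∧
    1 / omega₁ q ^ 2 + 1 / omega₂ q ^ 2
      = phi (-q) ^ 4 / (16 * q ^ 4 * psi (-q ^ 5) ^ 4)
        + phi (-q ^ 5) ^ 4 / (16 * q ^ 4 * psi (-q ^ 5) ^ 4)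
        - phi (-q) ^ 2 * phi (-q ^ 5) ^ 2 / (8 * q ^ 4 * psi (-q ^ 5) ^ 4)
        + 2 * phi (-q) * psi (q ^ 5) / (q * phi (-q ^ 10) * psi (-q)) := by
  have h₁ := omega₁_ne_zero hq1
  have h₂ := omega₂_ne_zero hq0 hq1
  refine ⟨h₁, h₂, ?_⟩
  calc
    _ = (1 / omega₂ q - 1 / omega₁ q) ^ 2 + 2 * (1 / (omega₁ q * omega₂ q)) := by
      field_simp
      ring
    _ = _ := by
      rw [one_div_omega₂_sub_one_div_omega₁ hq0 hq1, one_div_omega₁_mul_omega₂ hq0 hq1,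
        ramTheta_neg_mul_ramTheta_neg_eq hq0 hq1]
      ring

theorem stmt13 (q : ℝ) (hq0 : 0 < q) (hq1 : q < 1) :
    Omega1 q ≠ 0 ∧ Omega2 q ≠ 0 ∧
    1 / Omega1 q ^ 2 + 1 / Omega2 q ^ 2
      = phi (-(q : ℂ)) ^ 4 / (16 * (q : ℂ) ^ 4 * psi (-(q : ℂ) ^ 5) ^ 4)
        + phi (-(q : ℂ) ^ 5) ^ 4 / (16 * (q : ℂ) ^ 4 * psi (-(q : ℂ) ^ 5) ^ 4)
        - phi (-(q : ℂ)) ^ 2 * phi (-(q : ℂ) ^ 5) ^ 2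
            / (8 * (q : ℂ) ^ 4 * psi (-(q : ℂ) ^ 5) ^ 4)
        + 2 * phi (-(q : ℂ)) * psi ((q : ℂ) ^ 5)
            / ((q : ℂ) * phi (-(q : ℂ) ^ 10) * psi (-(q : ℂ))) :=
  stmt13_general (by exact_mod_cast hq0.ne')
    (by rwa [Complex.norm_real, Real.norm_of_nonneg hq0.le])
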